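/- Suppose in addition that (𝔹, ‖·‖) is a real separable Hilbert space, with the norm induced by the inner product. Then for every n ≥ 1, almost surely E[‖S_n − S_{n−1}‖² | F_{n−1}] ≤ 2^{p−1}·λ_n^p·(v + ‖μ − Ẑ_n‖^p). -/

import Mathlib

open MeasureTheory
open scoped Classical

/-- `truncB x = min(1, ‖x‖)/‖x‖` for `x ≠ 0`, and `truncB 0 = 1`; so `truncB x • x` is the
projection of `x` onto the closed unit ball. -/
noncomputable def truncB {B : Type*} [NormedAddCommGroup B] (x : B) : ℝ :=
  if x = 0 then 1 else min 1 ‖x‖ / ‖x‖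

/-- `K_p = (1/p) ((p-1)/p)^{p-1}`. -/
noncomputable def Kp (p : ℝ) : ℝ := (1 / p) * ((p - 1) / p) ^ (p - 1)

/-- `𝔠_p(ρ) = 2^{p+1} (e^{2ρ} - 2ρ - 1)/(2ρ)²`. -/
noncomputable def frakC (p ρ : ℝ) : ℝ :=
  2 ^ (p + 1) * (Real.exp (2 * ρ) - 2 * ρ - 1) / (2 * ρ) ^ 2

theorem truncB_eq {B : Type*} [NormedAddCommGroup B] (x : B) : truncB x = (max 1 ‖x‖)⁻¹ := by
  unfold truncB
  split_ifs with h
  · simp [h]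
  · have hx : 0 < ‖x‖ := norm_pos_iff.mpr h
    rcases le_total 1 ‖x‖ with h1 | h1
    · rw [min_eq_left h1, max_eq_right h1, one_div]
    · rw [min_eq_right h1, max_eq_left h1, div_self hx.ne', inv_one]

theorem truncB_smul_norm_le_one {B : Type*} [NormedAddCommGroup B] [NormedSpace ℝ B] (x : B) :
    ‖truncB x • x‖ ≤ 1 := by
  have h0 : (0 : ℝ) < max 1 ‖x‖ := lt_of_lt_of_le one_pos (le_max_left _ _)
  rw [norm_smul, truncB_eq, Real.norm_of_nonneg (inv_nonneg.mpr h0.le), inv_mul_le_iff₀ h0, mul_one]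
  exact le_max_right _ _

theorem truncB_smul_norm_le {B : Type*} [NormedAddCommGroup B] [NormedSpace ℝ B] (x : B) :
    ‖truncB x • x‖ ≤ ‖x‖ := by
  have h0 : (0 : ℝ) < max 1 ‖x‖ := lt_of_lt_of_le one_pos (le_max_left _ _)
  rw [norm_smul, truncB_eq, Real.norm_of_nonneg (inv_nonneg.mpr h0.le)]
  exact mul_le_of_le_one_left (norm_nonneg _) (inv_le_one_of_one_le₀ (le_max_left _ _))

theorem continuous_truncB {B : Type*} [NormedAddCommGroup B] :
    Continuous (fun x : B => truncB x) := by
  simp_rw [truncB_eq]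
  refine Continuous.inv₀ (by fun_prop) fun x => ?_
  exact (lt_of_lt_of_le one_pos (le_max_left _ _)).ne'

/-- Conditional variance is at most the conditional second moment. -/
theorem condExp_sq_sub_le {B : Type*} [NormedAddCommGroup B] [InnerProductSpace ℝ B]
    [CompleteSpace B] {Ω : Type*} {m mΩ : MeasurableSpace Ω} {P : Measure Ω}
    [IsProbabilityMeasure P] (hm : m ≤ mΩ) (W : Ω → B) (hW : AEStronglyMeasurable W P)
    (hb : ∀ ω, ‖W ω‖ ≤ 1) :
    P[fun ω => ‖W ω - (P[W | m]) ω‖ ^ 2 | m] ≤ᵐ[P] P[fun ω => ‖W ω‖ ^ 2 | m] := by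
  have hWi : Integrable W P := Integrable.of_bound hW 1 (ae_of_all _ hb)
  have hVb : ∀ᵐ ω ∂P, ‖(P[W | m]) ω‖ ≤ 1 := by
    have := ae_bdd_norm_condExp_of_ae_bdd_norm (m := m) (R := 1) (ae_of_all P hb)
    simpa using this
  set V := P[W | m] with hV
  have hVm : StronglyMeasurable[m] V := stronglyMeasurable_condExp
  have hVm' : AEStronglyMeasurable V P := (hVm.mono hm).aestronglyMeasurable
  have hsq : ∀ U : Ω → B, AEStronglyMeasurable U P → (∀ᵐ ω ∂P, ‖U ω‖ ≤ 1) →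
      Integrable (fun ω => ‖U ω‖ ^ 2) P := by
    intro U hU hUb
    refine Integrable.of_bound (hU.norm.pow 2) 1 ?_
    filter_upwards [hUb] with ω h
    rw [Real.norm_of_nonneg (by positivity)]
    exact pow_le_one₀ (norm_nonneg _) h
  have hW2 := hsq W hW (ae_of_all _ hb)
  have hV2 := hsq V hVm' hVb
  have hWV : Integrable (fun ω => inner ℝ (V ω) (W ω)) P := by
    refine Integrable.of_bound (hVm'.inner hW) 1 ?_
    filter_upwards [hVb] with ω h
    calc _ ≤ ‖V ω‖ * ‖W ω‖ := norm_inner_le_norm _ _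
      _ ≤ 1 * 1 := mul_le_mul h (hb ω) (norm_nonneg _) zero_le_one
      _ = 1 := one_mul 1
  have hpull : P[fun ω => inner ℝ (V ω) (W ω) | m] =ᵐ[P] fun ω => inner ℝ (V ω) (V ω) :=
    condExp_bilin_of_stronglyMeasurable_left (innerSL ℝ) hVm hWV hWi
  have heq : (fun ω => ‖W ω - V ω‖ ^ 2) =
      ((fun ω => ‖W ω‖ ^ 2) - (2 : ℝ) • (fun ω => inner ℝ (V ω) (W ω))) + fun ω => ‖V ω‖ ^ 2 := by
    ext ω
    simp only [Pi.add_apply, Pi.sub_apply, Pi.smul_apply, smul_eq_mul]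
    rw [norm_sub_sq_real, real_inner_comm]
  rw [heq]
  have h1 := condExp_add (hW2.sub (hWV.smul (2 : ℝ))) hV2 m
  have h2 := condExp_sub hW2 (hWV.smul (2 : ℝ)) m
  have h3 := condExp_smul (μ := P) (2 : ℝ) (fun ω => inner ℝ (V ω) (W ω)) m
  have h4 : P[fun ω => ‖V ω‖ ^ 2 | m] = fun ω => ‖V ω‖ ^ 2 :=
    condExp_of_stronglyMeasurable hm (hVm.norm.pow 2) hV2
  filter_upwards [h1, h2, h3, hpull] with ω h1 h2 h3 hp
  rw [h1, Pi.add_apply, h2, Pi.sub_apply, h3, Pi.smul_apply, hp, h4, real_inner_self_eq_norm_sq,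
    smul_eq_mul]
  nlinarith [sq_nonneg ‖V ω‖]

/-- If `0 ≤ f ≤ 1` and `f ≤ g * (h + k)` with `g, k ≥ 0` predictable (not necessarily
integrable), then the bound passes to conditional expectations. -/
theorem condExp_le_of_le_mul_add {Ω : Type*} {m mΩ : MeasurableSpace Ω} {P : Measure Ω}
    [IsProbabilityMeasure P] (hm : m ≤ mΩ) (f g h k : Ω → ℝ) (v : ℝ)
    (hf : Integrable f P) (hh : Integrable h P) (hg : StronglyMeasurable[m] g)
    (hk : StronglyMeasurable[m] k) (hg0 : ∀ ω, 0 ≤ g ω) (hk0 : ∀ ω, 0 ≤ k ω)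
    (hle : ∀ ω, f ω ≤ g ω * h ω + k ω) (hhv : ∀ᵐ ω ∂P, (P[h | m]) ω ≤ v) :
    ∀ᵐ ω ∂P, (P[f | m]) ω ≤ g ω * v + k ω := by
  set c : Ω → ℝ := fun ω => (1 + g ω + k ω)⁻¹ with hc
  have hpos : ∀ ω, 0 < 1 + g ω + k ω := fun ω => by linarith [hg0 ω, hk0 ω]
  have hcpos : ∀ ω, 0 < c ω := fun ω => inv_pos.mpr (hpos ω)
  have hcm : StronglyMeasurable[m] c :=
    ((((@measurable_const _ _ _ m (1 : ℝ)).add hg.measurable).add hk.measurable).inv).stronglyMeasurable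
  have hb1 : ∀ ω, ‖c ω‖ ≤ 1 := fun ω => by
    rw [Real.norm_of_nonneg (hcpos ω).le]
    exact inv_le_one_of_one_le₀ (by linarith [hg0 ω, hk0 ω])
  have hb2 : ∀ ω, ‖(c * g) ω‖ ≤ 1 := fun ω => by
    rw [Pi.mul_apply, Real.norm_of_nonneg (mul_nonneg (hcpos ω).le (hg0 ω)),
      inv_mul_le_iff₀ (hpos ω)]
    linarith [hg0 ω, hk0 ω]
  have hb3 : ∀ ω, ‖(c * k) ω‖ ≤ 1 := fun ω => by
    rw [Pi.mul_apply, Real.norm_of_nonneg (mul_nonneg (hcpos ω).le (hk0 ω)),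
      inv_mul_le_iff₀ (hpos ω)]
    linarith [hg0 ω, hk0 ω]
  have hcf : Integrable (c * f) P :=
    hf.bdd_mul (hcm.mono hm).aestronglyMeasurable (ae_of_all _ hb1)
  have hcgm : StronglyMeasurable[m] (c * g) := hcm.mul hg
  have hckm : StronglyMeasurable[m] (c * k) := hcm.mul hk
  have hcgh : Integrable (c * g * h) P :=
    hh.bdd_mul (hcgm.mono hm).aestronglyMeasurable (ae_of_all _ hb2)
  have hck : Integrable (c * k) P :=
    Integrable.of_bound (hckm.mono hm).aestronglyMeasurable 1 (ae_of_all _ hb3)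
  have hmono : P[c * f | m] ≤ᵐ[P] P[c * g * h + c * k | m] := by
    refine condExp_mono hcf (hcgh.add hck) (ae_of_all _ fun ω => ?_)
    simp only [Pi.mul_apply, Pi.add_apply]
    nlinarith [mul_le_mul_of_nonneg_left (hle ω) (hcpos ω).le]
  have e1 := condExp_mul_of_stronglyMeasurable_left hcm hcf hf
  have e2 := condExp_mul_of_stronglyMeasurable_left hcgm hcgh hh
  have e3 := condExp_add hcgh hck m
  have e4 : P[c * k | m] = c * k := condExp_of_stronglyMeasurable hm hckm hck
  filter_upwards [hmono, e1, e2, e3, hhv] with ω h0 h1 h2 h3 hv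
  rw [h1, h3, Pi.add_apply, h2, e4] at h0
  simp only [Pi.mul_apply] at h0
  have : c ω * (P[f | m]) ω ≤ c ω * (g ω * (P[h | m]) ω + k ω) := by linarith
  have := le_of_mul_le_mul_left this (hcpos ω)
  linarith [mul_le_mul_of_nonneg_left hv (hg0 ω)]

theorem norm_add_rpow_le {B : Type*} [NormedAddCommGroup B] (x y : B) {p : ℝ} (hp : 1 ≤ p) :
    ‖x + y‖ ^ p ≤ 2 ^ (p - 1) * (‖x‖ ^ p + ‖y‖ ^ p) := by
  have h : (‖x‖₊ + ‖y‖₊ : NNReal) ^ p ≤ 2 ^ (p - 1) * (‖x‖₊ ^ p + ‖y‖₊ ^ p) :=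
    NNReal.rpow_add_le_mul_rpow_add_rpow _ _ hp
  have h' : (‖x‖ + ‖y‖) ^ p ≤ 2 ^ (p - 1) * (‖x‖ ^ p + ‖y‖ ^ p) := by exact_mod_cast h
  exact (Real.rpow_le_rpow (norm_nonneg _) (norm_add_le _ _) (by linarith)).trans h'

/-- **Conditional second-moment bound for the increments of `S` in a Hilbert space.**
If `𝔹` is a real separable Hilbert space, then for every `n ≥ 1`, almost surely
`E[‖Sₙ - S_{n-1}‖² | F_{n-1}] ≤ 2^{p-1} λₙ^p (v + ‖μ - Ẑₙ‖^p)`. -/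
theorem stmt6
    {B : Type*} [NormedAddCommGroup B] [InnerProductSpace ℝ B] [CompleteSpace B]
    [TopologicalSpace.SeparableSpace B]
    {Ω : Type*} {mΩ : MeasurableSpace Ω} {P : Measure Ω} [IsProbabilityMeasure P]
    (ℱ : Filtration ℕ mΩ) (X : ℕ → Ω → B) (μ : B) (p v : ℝ)
    (hp1 : 1 < p) (hp2 : p ≤ 2) (hv : 0 < v)
    (hadapted : ∀ n : ℕ, 1 ≤ n → StronglyMeasurable[ℱ n] (X n))
    (hint : ∀ n : ℕ, 1 ≤ n → Integrable (X n) P)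
    (hmom : ∀ n : ℕ, 1 ≤ n → Integrable (fun ω => ‖X n ω‖ ^ p) P)
    (hcondmean : ∀ n : ℕ, P[X (n + 1) | ℱ n] =ᵐ[P] fun _ => μ)
    (hcondmom : ∀ n : ℕ, ∀ᵐ ω ∂P, (P[fun ω' => ‖X (n + 1) ω' - μ‖ ^ p | ℱ n]) ω ≤ v)
    (Z : ℕ → Ω → B) (hZpred : ∀ n : ℕ, StronglyMeasurable[ℱ n] (Z (n + 1)))
    (lam : ℕ → Ω → ℝ) (hlampred : ∀ n : ℕ, StronglyMeasurable[ℱ n] (lam (n + 1)))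
    (hlampos : ∀ n ω, 0 < lam n ω)
    (S : ℕ → Ω → B)
    (hS : ∀ n ω, S n ω = ∑ m ∈ Finset.range n,
      lam (m + 1) ω •
        (truncB (lam (m + 1) ω • (X (m + 1) ω - Z (m + 1) ω)) • (X (m + 1) ω - Z (m + 1) ω)
          + Z (m + 1) ω
          - ((P[fun ω' => truncB (lam (m + 1) ω' • (X (m + 1) ω' - Z (m + 1) ω')) •
                (X (m + 1) ω' - Z (m + 1) ω') | ℱ m]) ω + Z (m + 1) ω)))
    (n : ℕ) :
    ∀ᵐ ω ∂P, (P[fun ω' => ‖S (n + 1) ω' - S n ω'‖ ^ 2 | ℱ n]) ω ≤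
      2 ^ (p - 1) * lam (n + 1) ω ^ p * (v + ‖μ - Z (n + 1) ω‖ ^ p) := by
  have hm := ℱ.le n
  have hXm : StronglyMeasurable (X (n + 1)) := (hadapted (n + 1) (by omega)).mono (ℱ.le _)
  have hXi := hint (n + 1) (by omega)
  have hXp := hmom (n + 1) (by omega)
  have hcm := hcondmom n
  have hZm := hZpred n
  have hLm := hlampred n
  have hL : ∀ ω, 0 < lam (n + 1) ω := hlampos (n + 1)
  have hD : ∀ ω, S (n + 1) ω - S n ω = _ := fun ω => by
    rw [hS (n + 1) ω, hS n ω, Finset.sum_range_succ, add_sub_cancel_left]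
  simp_rw [hD]
  clear hD hS
  generalize X (n + 1) = X at *
  generalize Z (n + 1) = Z at *
  generalize lam (n + 1) = L at *
  set T : Ω → B := fun ω => truncB (L ω • (X ω - Z ω)) • (X ω - Z ω) with hT
  set W : Ω → B := fun ω => truncB (L ω • (X ω - Z ω)) • (L ω • (X ω - Z ω)) with hWdef
  have hYm : StronglyMeasurable (fun ω => L ω • (X ω - Z ω)) :=
    (hLm.mono hm).smul (hXm.sub (hZm.mono hm))
  have hWm : StronglyMeasurable W := (continuous_truncB.comp_stronglyMeasurable hYm).smul hYm
  have hWb : ∀ ω, ‖W ω‖ ≤ 1 := fun ω => truncB_smul_norm_le_one _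
  have hLT : L • T = W := by
    ext ω
    simp only [hT, hWdef, Pi.smul_apply']
    rw [smul_comm]
  have hWi : Integrable W P := Integrable.of_bound hWm.aestronglyMeasurable 1 (ae_of_all _ hWb)
  have hW2 : Integrable (fun ω => ‖W ω‖ ^ 2) P := by
    refine Integrable.of_bound (hWm.norm.pow 2).aestronglyMeasurable 1 (ae_of_all _ fun ω => ?_)
    rw [Real.norm_of_nonneg (by positivity)]
    exact pow_le_one₀ (norm_nonneg _) (hWb ω)
  have step1 : P[fun ω => ‖L ω • (T ω + Z ω - ((P[T | ℱ n]) ω + Z ω))‖ ^ 2 | ℱ n] ≤ᵐ[P]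
      P[fun ω => ‖W ω‖ ^ 2 | ℱ n] := by
    have hdec : ∀ ω, L ω • (T ω + Z ω - ((P[T | ℱ n]) ω + Z ω)) =
        W ω - L ω • (P[T | ℱ n]) ω := fun ω => by
      rw [add_sub_add_right_eq_sub, smul_sub, ← hLT, Pi.smul_apply']
    simp_rw [hdec]
    by_cases hTi : Integrable T P
    · have hpull : P[W | ℱ n] =ᵐ[P] L • P[T | ℱ n] := by
        rw [← hLT]
        exact condExp_smul_of_aestronglyMeasurable_left hLm.aestronglyMeasurable
          (by rw [hLT]; exact hWi) hTi
      refine Filter.EventuallyLE.trans (Filter.EventuallyEq.le (condExp_congr_ae ?_))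
        (condExp_sq_sub_le hm W hWm.aestronglyMeasurable hWb)
      filter_upwards [hpull] with ω h
      rw [h, Pi.smul_apply']
    · rw [condExp_of_not_integrable hTi]
      simp only [Pi.zero_apply, smul_zero, sub_zero]
      exact Filter.EventuallyLE.refl _ _
  have hh : Integrable (fun ω => ‖X ω - μ‖ ^ p) P := by
    refine Integrable.mono' ((hXp.add (integrable_const (‖-μ‖ ^ p))).const_mul (2 ^ (p - 1))) ?_
      (ae_of_all _ fun ω => ?_)
    · exact (((hXm.sub stronglyMeasurable_const).norm.measurable).pow_const p).aestronglyMeasurable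
    · rw [Real.norm_of_nonneg (by positivity), sub_eq_add_neg]
      exact norm_add_rpow_le _ _ hp1.le
  have step2 := condExp_le_of_le_mul_add hm (fun ω => ‖W ω‖ ^ 2)
    (fun ω => 2 ^ (p - 1) * L ω ^ p) (fun ω => ‖X ω - μ‖ ^ p)
    (fun ω => 2 ^ (p - 1) * L ω ^ p * ‖μ - Z ω‖ ^ p) v hW2 hh
    ((hLm.measurable.pow_const p).const_mul _).stronglyMeasurable
    (((hLm.measurable.pow_const p).const_mul _).mul
      (((@stronglyMeasurable_const _ _ (ℱ n) _ μ).sub hZm).norm.measurable.pow_const p)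
      ).stronglyMeasurable
    (fun ω => by have := (hL ω).le; positivity) (fun ω => by have := (hL ω).le; positivity)
    (fun ω => by
      have hLω := (hL ω).le
      have h1 : ‖W ω‖ ^ 2 ≤ ‖W ω‖ ^ p := by
        rw [← Real.rpow_two]
        exact Real.rpow_le_rpow_of_exponent_ge' (norm_nonneg _) (hWb ω) (by linarith) hp2
      have h2 : ‖W ω‖ ^ p ≤ (L ω * ‖X ω - Z ω‖) ^ p := by
        refine Real.rpow_le_rpow (norm_nonneg _) ?_ (by linarith)
        refine (truncB_smul_norm_le _).trans ?_
        rw [norm_smul, Real.norm_of_nonneg hLω]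
      rw [Real.mul_rpow hLω (norm_nonneg _)] at h2
      have h3 := norm_add_rpow_le (X ω - μ) (μ - Z ω) hp1.le
      rw [sub_add_sub_cancel] at h3
      have h4 := mul_le_mul_of_nonneg_left h3 (Real.rpow_nonneg hLω p)
      calc ‖W ω‖ ^ 2 ≤ _ := h1.trans (h2.trans h4)
        _ = _ := by ring)
    hcm
  filter_upwards [step1, step2] with ω h1 h2
  refine h1.trans (h2.trans (le_of_eq ?_))
  ring
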